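/- arXiv:1909.01906 — 3 statements merged into one kernel-verified Lean document; each statement's English description precedes it below -/
import Mathlib

section
/- Let N ⊆ M_m be a unital *-subalgebra, let ρ ∈ M_m be a density and let e be the support projection of ρ. Then for every density σ ∈ N one has ‖σ^{1/2} ρ^{1/2}‖_1 ≤ ‖E(e)‖_∞^{1/2}; consequently D_{1/2}(ρ‖N) ≥ −log ‖E(e)‖_∞. -/
open scoped ENNReal Classical ComplexOrder
open Matrix

noncomputable section

namespace GJL

variable {n : Type*} [Fintype n] [DecidableEq n]

/-- `Mat n` is the matrix *-algebra with rows and columns indexed by `n`. -/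
abbrev Mat (n : Type*) [Fintype n] [DecidableEq n] := Matrix n n ℂ

/-- A density matrix: positive semidefinite with trace one. -/
def IsDensity (ρ : Mat n) : Prop := ρ.PosSemidef ∧ ρ.trace = 1

/-- The real part of the (matrix) trace. -/
def traceR (A : Mat n) : ℝ := (A.trace).re

/-- Real matrix powers via the continuous functional calculus.  For positive
semidefinite matrices and negative exponents this is the generalized inverse
power on the support, since `(0 : ℝ) ^ r = 0` for `r ≠ 0`. -/
def mpow (A : Mat n) (r : ℝ) : Mat n := cfc (fun x : ℝ => x ^ r) A

/-- Matrix logarithm on the support (`Real.log 0 = 0`). -/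
def mlog (A : Mat n) : Mat n := cfc Real.log A

/-- Schatten `p`-norm `(Tr ((x* x)^(p/2)))^(1/p)`. -/
def snorm (p : ℝ) (x : Mat n) : ℝ := (traceR (mpow (xᴴ * x) (p/2))) ^ (1/p)

/-- Operator norm `‖x‖_∞`. -/
def opNorm (x : Mat n) : ℝ := ‖(Matrix.toEuclideanCLM (𝕜 := ℂ) x : EuclideanSpace ℂ n →L[ℂ] EuclideanSpace ℂ n)‖

/-- The support projection of `ρ` is dominated by that of `σ` (for positive
semidefinite matrices: `ker σ ⊆ ker ρ`). -/
def suppLe (ρ σ : Mat n) : Prop := ∀ v, σ.mulVec v = 0 → ρ.mulVec v = 0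

/-- `e` is the support projection of `ρ`. -/
def IsSupportProj (ρ e : Mat n) : Prop :=
  e.IsHermitian ∧ e * e = e ∧ ∀ v, e.mulVec v = 0 ↔ ρ.mulVec v = 0

/-- `D_∞(ρ‖σ) = log min {λ ≥ 0 | ρ ≤ λ σ}`, `⊤` if no such `λ` exists. -/
def Dinf (ρ σ : Mat n) : EReal :=
  if ∃ c : ℝ, 0 ≤ c ∧ (c • σ - ρ).PosSemidef then
    ((Real.log (sInf {c : ℝ | 0 ≤ c ∧ (c • σ - ρ).PosSemidef}) : ℝ) : EReal)
  else ⊤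

/-- Umegaki relative entropy `D(ρ‖σ) = Tr(ρ log ρ - ρ log σ)`, `⊤` if the
support condition fails. -/
def DU (ρ σ : Mat n) : EReal :=
  if suppLe ρ σ then ((traceR (ρ * mlog ρ - ρ * mlog σ) : ℝ) : EReal) else ⊤

/-- The sandwiched matrix `σ^{(1-p)/(2p)} ρ σ^{(1-p)/(2p)}`; note that for
`p > 1` the exponent `(1-p)/(2p)` equals `-1/(2p')` with `1/p + 1/p' = 1`. -/
def sandwich (p : ℝ) (ρ σ : Mat n) : Mat n :=
  mpow σ ((1 - p)/(2*p)) * ρ * mpow σ ((1 - p)/(2*p))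

/-- The sandwiched Rényi relative entropy `D_p(ρ‖σ)` for `p ∈ [1/2, ∞]`:
for `p ∈ (1,∞)` it is `p' log ‖σ^{-1/(2p')} ρ σ^{-1/(2p')}‖_p
= (p-1)⁻¹ log Tr ((σ^{-1/(2p')} ρ σ^{-1/(2p')})^p)` when the support of `ρ` is
dominated by that of `σ` and `⊤` otherwise; for `p ∈ [1/2, 1)` it is
`(p-1)⁻¹ log Tr ((σ^{(1-p)/(2p)} ρ σ^{(1-p)/(2p)})^p)` (`⊤` when the trace
vanishes, i.e. when the honest value is `+∞`); `D_1` is the Umegaki relative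
entropy and `D_∞` the max-relative entropy. -/
def Dp (p : ℝ≥0∞) (ρ σ : Mat n) : EReal :=
  if p = ⊤ then Dinf ρ σ
  else if p = 1 then DU ρ σ
  else if 1 < p.toReal ∧ ¬ suppLe ρ σ then ⊤
  else if traceR (mpow (sandwich p.toReal ρ σ) p.toReal) = 0 then ⊤
  else (((p.toReal - 1)⁻¹ * Real.log (traceR (mpow (sandwich p.toReal ρ σ) p.toReal)) : ℝ) : EReal)

/-- `D_p(ρ‖S) = inf { D_p(ρ‖σ) | σ a density in S }`. -/
def DpSet (p : ℝ≥0∞) (ρ : Mat n) (S : Set (Mat n)) : EReal :=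
  ⨅ σ ∈ {σ ∈ S | IsDensity σ}, Dp p ρ σ

/-- `D_p(A‖S) = sup { D_p(ρ‖S) | ρ a density in A }`. -/
def DpRel (p : ℝ≥0∞) (A S : Set (Mat n)) : EReal :=
  ⨆ ρ ∈ {ρ ∈ A | IsDensity ρ}, DpSet p ρ S

open scoped Kronecker in
/-- The algebraic tensor product `N₁ ⊗ N₂ ⊆ M_{n₁} ⊗ M_{n₂} = M_{n₁ × n₂}`,
realized as the linear span of Kronecker products. -/
def tensorSpan {n₁ n₂ : Type*} [Fintype n₁] [DecidableEq n₁] [Fintype n₂] [DecidableEq n₂]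
    (N₁ : Set (Mat n₁)) (N₂ : Set (Mat n₂)) : Set (Mat (n₁ × n₂)) :=
  ↑(Submodule.span ℂ {z : Mat (n₁ × n₂) | ∃ x ∈ N₁, ∃ y ∈ N₂, z = x ⊗ₖ y})

/-- `D_{p,cb}(M‖N) = sup_k D_p(M_k ⊗ M ‖ M_k ⊗ N)`. -/
def DpCb (p : ℝ≥0∞) (N : Set (Mat n)) : EReal :=
  ⨆ k : ℕ, DpRel p Set.univ (tensorSpan (Set.univ : Set (Mat (Fin k))) N)

/-- `E` is the trace preserving conditional expectation onto `N`, i.e. the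
orthogonal projection onto `N` with respect to the Hilbert–Schmidt inner
product `⟨x,y⟩ = Tr(x* y)`. -/
def IsCondExp (N : Set (Mat n)) (E : Mat n →ₗ[ℂ] Mat n) : Prop :=
  (∀ x, E x ∈ N) ∧ (∀ x ∈ N, E x = x) ∧
    ∀ x y, y ∈ N → ((E x)ᴴ * y).trace = (xᴴ * y).trace

/-- The Pimsner–Popa index constant
`λ(M:N) = max {c ≥ 0 | c x ≤ E(x) for all x ≥ 0}`. -/
def ppIndex (E : Mat n →ₗ[ℂ] Mat n) : ℝ :=
  sSup {c : ℝ | 0 ≤ c ∧ ∀ x : Mat n, x.PosSemidef → (E x - c • x).PosSemidef}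

/-- von Neumann entropy `H(ρ) = -Tr(ρ log ρ)`. -/
def vnEntropy (ρ : Mat n) : ℝ := - traceR (ρ * mlog ρ)

/-- The amplification `id_{M_k} ⊗ Φ` acting on `M_k ⊗ M_n = M_{k × n}`,
applying `Φ` blockwise. -/
def ampFun (k : Type*) [Fintype k] [DecidableEq k] (Φ : Mat n →ₗ[ℂ] Mat n)
    (X : Mat (k × n)) : Mat (k × n) :=
  Matrix.of fun a b => Φ (Matrix.of fun s t => X (a.1, s) (b.1, t)) a.2 b.2

/-- Complete positivity: all amplifications `id_{M_k} ⊗ Φ` preserve positive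
semidefiniteness. -/
def IsCP (Φ : Mat n →ₗ[ℂ] Mat n) : Prop :=
  ∀ (k : ℕ) (X : Mat (Fin k × n)), X.PosSemidef → (ampFun (Fin k) Φ X).PosSemidef

/-- Completely positive and trace preserving. -/
def IsCPTP (Φ : Mat n →ₗ[ℂ] Mat n) : Prop :=
  IsCP Φ ∧ ∀ x : Mat n, (Φ x).trace = x.trace

lemma cont_spec (A : Mat n) (f : ℝ → ℝ) : ContinuousOn f (spectrum ℝ A) :=
  Set.Finite.continuousOn (Matrix.finite_real_spectrum) f

lemma spec_nonneg {A : Mat n} (hA : A.PosSemidef) {x : ℝ} (hx : x ∈ spectrum ℝ A) : 0 ≤ x := by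
  rw [hA.1.spectrum_real_eq_range_eigenvalues] at hx
  obtain ⟨i, rfl⟩ := hx
  exact hA.eigenvalues_nonneg i

lemma mpow_herm (A : Mat n) (r : ℝ) : (mpow A r)ᴴ = mpow A r := by
  have h : IsSelfAdjoint (mpow A r) := cfc_predicate _ _
  exact h

lemma mpow_mul {A : Mat n} (a b : ℝ) :
    mpow A a * mpow A b = cfc (fun x : ℝ => x ^ a * x ^ b) A :=
  (cfc_mul _ _ A (cont_spec _ _) (cont_spec _ _)).symm

lemma mpow_half_sq {A : Mat n} (hA : A.PosSemidef) :
    mpow A (1/2) * mpow A (1/2) = A := by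
  have hs : IsSelfAdjoint A := hA.1
  rw [mpow_mul]
  conv_rhs => rw [← cfc_id' ℝ A]
  refine cfc_congr fun x hx => ?_
  have h0 := spec_nonneg hA hx
  simp only [← Real.sqrt_eq_rpow]
  exact Real.mul_self_sqrt h0

lemma inv_mul_self {A : Mat n} (hA : A.PosSemidef) :
    mpow A (-(1/2)) * A = mpow A (1/2) := by
  have hs : IsSelfAdjoint A := hA.1
  have : mpow A (-(1/2)) * cfc (fun x : ℝ => x) A = mpow A (1/2) := by
    unfold mpow
    rw [← cfc_mul _ _ A (cont_spec _ _) (cont_spec _ _)]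
    refine cfc_congr fun x hx => ?_
    rcases (spec_nonneg hA hx).eq_or_lt with h | h
    · subst h; simp
    · change x ^ (-(1/2) : ℝ) * x = x ^ (1/2 : ℝ)
      nth_rw 2 [← Real.rpow_one x]
      rw [← Real.rpow_add h]; norm_num
  rwa [cfc_id' ℝ A] at this

lemma half_inv_inv {A : Mat n} (hA : A.PosSemidef) :
    mpow A (1/2) * mpow A (-(1/2)) * mpow A (-(1/2)) = mpow A (-(1/2)) := by
  rw [mpow_mul]
  unfold mpow
  rw [← cfc_mul _ _ A (cont_spec _ _) (cont_spec _ _)]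
  refine cfc_congr fun x hx => ?_
  rcases (spec_nonneg hA hx).eq_or_lt with h | h
  · subst h; simp
  · simp only [← Real.rpow_add h]; norm_num

lemma one_sub_proj {P : Mat n} (h1 : Pᴴ = P) (h2 : P * P = P) : (1 - P).PosSemidef := by
  have : 1 - P = (1 - P)ᴴ * (1 - P) := by
    simp [h1, mul_sub, sub_mul, h2]
  rw [this]
  exact posSemidef_conjTranspose_mul_self _

lemma polar (X : Mat n) : ∃ V : Mat n, (1 - Vᴴ * V).PosSemidef ∧ (1 - V * Vᴴ).PosSemidef ∧
    Vᴴ * X = mpow (Xᴴ * X) (1/2) := by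
  have hY := posSemidef_conjTranspose_mul_self X
  have h1 := inv_mul_self hY
  have h2 := half_inv_inv hY
  have hB := mpow_herm (Xᴴ * X) (-(1/2))
  rw [← h1] at h2
  set B := mpow (Xᴴ * X) (-(1/2)) with hBd
  refine ⟨X * B, one_sub_proj ?_ ?_, one_sub_proj ?_ ?_, ?_⟩
  · simp
  · rw [conjTranspose_mul, hB]
    calc B * Xᴴ * (X * B) * (B * Xᴴ * (X * B)) = (B * (Xᴴ * X) * B * B) * (Xᴴ * X) * B := by
          noncomm_ring
      _ = _ := by rw [h2]; noncomm_ring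
  · simp
  · rw [conjTranspose_mul, hB]
    calc X * B * (B * Xᴴ) * (X * B * (B * Xᴴ)) = X * B * (B * (Xᴴ * X) * B * B) * Xᴴ := by
          noncomm_ring
      _ = _ := by rw [h2]; noncomm_ring
  · rw [conjTranspose_mul, hB, ← h1]; noncomm_ring

lemma cs {W G : Mat n} (hW : (Wᴴ * W).trace.re ≤ 1) :
    (Wᴴ * G).trace.re ^ 2 ≤ (Gᴴ * G).trace.re := by
  set a := (Wᴴ * G).trace.re with ha
  have h := (posSemidef_conjTranspose_mul_self (G - (a : ℂ) • W)).trace_nonneg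
  have h' := (Complex.le_def.1 h).1
  have hc : (Gᴴ * W).trace.re = a := by
    have : Gᴴ * W = (Wᴴ * G)ᴴ := by simp
    rw [this, trace_conjTranspose]; simp [ha]
  simp only [conjTranspose_sub, conjTranspose_smul, sub_mul, mul_sub, smul_mul, Matrix.mul_smul,
    trace_sub, trace_smul, Complex.sub_re, Complex.zero_re, smul_eq_mul, Complex.star_def,
    Complex.conj_ofReal, Complex.re_ofReal_mul, hc, ← ha] at h'
  nlinarith [sq_nonneg a]

lemma trace_contr {r Q : Mat n} (hr : rᴴ = r) (htr : (r * r).trace = 1) (hQ : (1 - Q).PosSemidef) :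
    (r * Q * r).trace.re ≤ 1 := by
  have h := (hQ.conjTranspose_mul_mul_same r).trace_nonneg
  have h' := (Complex.le_def.1 h).1
  rw [hr, mul_sub, sub_mul, mul_one, trace_sub, htr] at h'
  simp at h'
  linarith

lemma trace_op (T s : Mat n) (hs : sᴴ = s) (htr : (s * s).trace = 1) :
    (Tᴴ * (s * s)).trace.re ≤ opNorm T := by
  let v : n → EuclideanSpace ℂ n := fun i => WithLp.toLp 2 (fun j => s j i)
  have h1 : ∀ A : Mat n, (Aᴴ * (s * s)).trace =
      ∑ i, inner ℂ (Matrix.toEuclideanCLM (𝕜 := ℂ) A (v i)) (v i) := by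
    intro A
    have : (Aᴴ * (s * s)).trace = ((A * s)ᴴ * s).trace := by
      rw [conjTranspose_mul, hs, ← mul_assoc, trace_mul_comm, ← mul_assoc]
    rw [this]
    simp only [trace, diag_apply, mul_apply, PiLp.inner_apply, v, Matrix.toEuclideanCLM_toLp,
      conjTranspose_apply, mulVec, dotProduct]
    refine Finset.sum_congr rfl fun i _ => Finset.sum_congr rfl fun j _ => ?_
    simp [mul_comm]
  have h2 : (1 : ℝ) = ∑ i, ‖v i‖ ^ 2 := by
    have := h1 1
    rw [conjTranspose_one, one_mul, htr] at this
    have := congrArg Complex.re this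
    simp only [map_one, one_apply_eq_self] at this
    rw [Complex.re_sum] at this
    simp only [Complex.one_re] at this
    rw [this]
    exact Finset.sum_congr rfl fun i _ => (norm_sq_eq_re_inner (𝕜 := ℂ) (v i)).symm
  rw [h1, Complex.re_sum]
  calc _ ≤ ∑ i, opNorm T * ‖v i‖ ^ 2 := by
        refine Finset.sum_le_sum fun i _ => ?_
        refine (Complex.re_le_norm _).trans ((norm_inner_le_norm _ _).trans ?_)
        have := (Matrix.toEuclideanCLM (𝕜 := ℂ) T).le_opNorm (v i)
        rw [pow_two, ← mul_assoc]
        exact mul_le_mul_of_nonneg_right this (norm_nonneg _)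
    _ = _ := by rw [← Finset.mul_sum, ← h2, mul_one]

lemma supp_mul {ρ e : Mat n} (hρ : ρ.PosSemidef) (he : IsSupportProj ρ e) :
    mpow ρ (1/2) * e = mpow ρ (1/2) := by
  obtain ⟨h1, h2, h3⟩ := he
  have hz : ρ * (1 - e) = 0 := by
    ext j i
    have : e *ᵥ ((1 - e) *ᵥ Pi.single i 1) = 0 := by
      rw [mulVec_mulVec, mul_sub, h2, mul_one, sub_self, zero_mulVec]
    have := (h3 _).1 this
    rw [mulVec_mulVec] at this
    simpa using congrFun this j
  have hr := mpow_half_sq hρ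
  have hh := mpow_herm ρ (1/2)
  set r := mpow ρ (1/2)
  have : r * (1 - e) = 0 := by
    rw [← conjTranspose_mul_self_eq_zero, conjTranspose_mul, hh, mul_assoc, ← mul_assoc r, hr, hz,
      mul_zero]
  rw [mul_sub, mul_one, sub_eq_zero] at this
  exact this.symm

lemma main_bounds {ρ σ e : Mat n} {E : Mat n →ₗ[ℂ] Mat n} {S : Set (Mat n)} (hE : IsCondExp S E)
    (hρ : IsDensity ρ) (he : IsSupportProj ρ e) (hσS : σ ∈ S) (hσ : IsDensity σ) :
    (traceR (mpow ((mpow σ (1/2) * mpow ρ (1/2))ᴴ * (mpow σ (1/2) * mpow ρ (1/2))) (1/2))) ^ 2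
      ≤ opNorm (E e) ∧
    (traceR (mpow (mpow σ (1/2) * ρ * mpow σ (1/2)) (1/2))) ^ 2 ≤ opNorm (E e) := by
  have hre := supp_mul hρ.1 he
  have hr := mpow_half_sq hρ.1
  have hrh := mpow_herm ρ (1/2)
  have hs := mpow_half_sq hσ.1
  have hsh := mpow_herm σ (1/2)
  have hop := trace_op (E e) (mpow σ (1/2)) hsh (by rw [hs]; exact hσ.2)
  rw [hs, hE.2.2 e σ hσS, he.1.eq] at hop
  have hrt : (mpow ρ (1/2) * mpow ρ (1/2)).trace = 1 := by rw [hr]; exact hρ.2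
  have h1 := he.1.eq
  have h2 := he.2.1
  set r := mpow ρ (1/2)
  set s := mpow σ (1/2)
  have her : e * r = r := by
    have := congrArg conjTranspose hre
    rwa [conjTranspose_mul, h1, hrh] at this
  constructor
  · obtain ⟨V, hV1, hV2, hV⟩ := polar (s * r)
    rw [← hV]
    have hw := trace_contr hrh hrt hV1
    have := cs (W := V * r) (G := s * e) (by
      rwa [conjTranspose_mul, hrh, mul_assoc, ← mul_assoc Vᴴ, ← mul_assoc])
    have e1 : ((V * r)ᴴ * (s * e)).trace = (Vᴴ * (s * r)).trace := by
      rw [conjTranspose_mul, hrh, mul_assoc, trace_mul_comm]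
      simp only [mul_assoc, her]
    have e2 : ((s * e)ᴴ * (s * e)).trace = (e * σ).trace := by
      rw [conjTranspose_mul, hsh, h1, mul_assoc, ← mul_assoc s, hs, trace_mul_comm, mul_assoc, h2,
        trace_mul_comm]
    rw [e1, e2] at this
    exact this.trans hop
  · have e0 : s * ρ * s = (r * s)ᴴ * (r * s) := by
      rw [conjTranspose_mul, hrh, hsh, ← hr]; simp only [mul_assoc]
    rw [e0]
    obtain ⟨V, hV1, hV2, hV⟩ := polar (r * s)
    rw [← hV]
    have hw := trace_contr hrh hrt hV2
    have := cs (W := r * V) (G := e * s) (by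
      rw [trace_mul_comm, conjTranspose_mul, hrh]
      simp only [mul_assoc] at hw ⊢
      exact hw)
    have e1 : ((r * V)ᴴ * (e * s)).trace = (Vᴴ * (r * s)).trace := by
      rw [conjTranspose_mul, hrh, mul_assoc, ← mul_assoc r, hre]
    have e2 : ((e * s)ᴴ * (e * s)).trace = (e * σ).trace := by
      rw [conjTranspose_mul, hsh, h1, mul_assoc, ← mul_assoc e, h2, trace_mul_comm, mul_assoc, hs]
    rw [e1, e2] at this
    exact this.trans hop

/-- if `e` is the support projection of a density `ρ`, then for
every density `σ ∈ N`, `‖σ^{1/2} ρ^{1/2}‖₁ ≤ ‖E(e)‖_∞^{1/2}`; consequently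
`D_{1/2}(ρ‖N) ≥ -log ‖E(e)‖_∞`. -/
theorem statement1 {m : ℕ} (N : StarSubalgebra ℂ (Mat (Fin m)))
    (E : Mat (Fin m) →ₗ[ℂ] Mat (Fin m)) (hE : IsCondExp (N : Set (Mat (Fin m))) E)
    (ρ e : Mat (Fin m)) (hρ : IsDensity ρ) (he : IsSupportProj ρ e) :
    (∀ σ ∈ (N : Set (Mat (Fin m))), IsDensity σ →
        snorm 1 (mpow σ (1/2) * mpow ρ (1/2)) ≤ (opNorm (E e)) ^ ((1 : ℝ)/2)) ∧
    ((- Real.log (opNorm (E e)) : ℝ) : EReal) ≤ DpSet 2⁻¹ ρ (N : Set (Mat (Fin m))) := by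
  constructor
  · intro σ hσN hσ
    have h := (main_bounds hE hρ he hσN hσ).1
    unfold snorm
    rw [← Real.sqrt_eq_rpow, div_one, Real.rpow_one]
    exact Real.le_sqrt_of_sq_le h
  · unfold DpSet
    refine le_iInf₂ fun σ hσ => ?_
    have h := (main_bounds hE hρ he hσ.1 hσ.2).2
    have hp : ((2⁻¹ : ℝ≥0∞)).toReal = 1/2 := by simp
    have hn1 : (2⁻¹ : ℝ≥0∞) ≠ ⊤ := by simp
    have hn2 : (2⁻¹ : ℝ≥0∞) ≠ 1 := by
      intro h
      have := congrArg ENNReal.toReal h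
      rw [hp] at this
      norm_num at this
    unfold Dp
    rw [if_neg hn1, if_neg hn2, hp, if_neg (by norm_num)]
    split_ifs with h0
    · exact le_top
    · have hsw : sandwich (1/2) ρ σ = mpow σ (1/2) * ρ * mpow σ (1/2) := by
        unfold sandwich; norm_num
      rw [hsw] at h0 ⊢
      rw [EReal.coe_le_coe_iff]
      have hl := Real.log_le_log (by positivity) h
      rw [Real.log_pow] at hl
      norm_num at hl ⊢
      linarith

end GJL
end
end

section
/- Let N ⊆ M_m be a unital *-subalgebra, let ρ ∈ M_m be a density and let σ ∈ N be a density whose support projection dominates that of ρ. Then D(ρ‖σ) = D(ρ‖E(ρ)) + D(E(ρ)‖σ). -/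
open scoped ENNReal Classical ComplexOrder
open Matrix

noncomputable section

namespace GJL

variable {n : Type*} [Fintype n] [DecidableEq n]

open scoped MatrixOrder Matrix.Norms.L2Operator in
theorem aux_factor {m : ℕ} (A : Mat (Fin m)) (hA : A.PosSemidef) :
    ∃ B : Mat (Fin m), A = Bᴴ * B := by
  obtain ⟨B, hB⟩ := CStarAlgebra.nonneg_iff_eq_star_mul_self.mp hA.nonneg
  exact ⟨B, hB⟩

theorem aux_cfc_mem {m : ℕ} (N : StarSubalgebra ℂ (Mat (Fin m))) (A : Mat (Fin m))
    (hA : A.IsHermitian) (hN : A ∈ N) (f : ℝ → ℝ) : cfc f A ∈ N := by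
  have hsa : IsSelfAdjoint A := hA
  have hfin : (spectrum ℝ A).Finite := Matrix.finite_real_spectrum
  set P : Polynomial ℝ := Lagrange.interpolate hfin.toFinset id f with hP
  have h1 : cfc f A = cfc P.eval A := by
    apply cfc_congr
    intro x hx
    have := Lagrange.eval_interpolate_at_node (s := hfin.toFinset) (v := id) f
      (Function.injective_id.injOn) (hfin.mem_toFinset.2 hx)
    exact this.symm
  rw [h1, cfc_polynomial P A hsa]
  have h2 : A ∈ N.toSubalgebra.restrictScalars ℝ := hN
  have h3 : Algebra.adjoin ℝ {A} ≤ N.toSubalgebra.restrictScalars ℝ :=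
    Algebra.adjoin_le (by simpa using h2)
  exact h3 (Polynomial.aeval_mem_adjoin_singleton ℝ A)

theorem aux_proj {m : ℕ} (N : StarSubalgebra ℂ (Mat (Fin m))) (A : Mat (Fin m))
    (hA : A.IsHermitian) (hN : A ∈ N) :
    ∃ q r : Mat (Fin m), q ∈ N ∧ qᴴ = q ∧ q * q = q ∧ A * q = 0 ∧ q + r * A = 1 := by
  have hsa : IsSelfAdjoint A := hA
  have hfin : (spectrum ℝ A).Finite := Matrix.finite_real_spectrum
  have hc : ∀ f : ℝ → ℝ, ContinuousOn f (spectrum ℝ A) := fun f => hfin.continuousOn f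
  refine ⟨cfc (fun x : ℝ => if x = 0 then (1:ℝ) else 0) A, cfc (fun x : ℝ => x⁻¹) A,
    aux_cfc_mem N A hA hN _, ?_, ?_, ?_, ?_⟩
  · exact (cfc_predicate (R := ℝ) (p := IsSelfAdjoint) _ A : IsSelfAdjoint _)
  · rw [← cfc_mul _ _ A (hc _) (hc _)]
    congr 1
    ext x
    split_ifs <;> simp
  · nth_rewrite 1 [← cfc_id ℝ A hsa]
    rw [← cfc_mul _ _ A (hc _) (hc _), ← cfc_zero ℝ A]
    congr 1
    ext x
    by_cases h : x = 0 <;> simp [h]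
  · nth_rewrite 3 [← cfc_id ℝ A hsa]
    rw [← cfc_mul _ _ A (hc _) (hc _), ← cfc_add A _ _ (hc _) (hc _), ← cfc_one ℝ A hsa]
    congr 1
    ext x
    by_cases h : x = 0 <;> simp [h]

/-- for a density `ρ` and a density `σ ∈ N` whose support
dominates that of `ρ`, `D(ρ‖σ) = D(ρ‖E(ρ)) + D(E(ρ)‖σ)`. -/
theorem statement2 {m : ℕ} (N : StarSubalgebra ℂ (Mat (Fin m)))
    (E : Mat (Fin m) →ₗ[ℂ] Mat (Fin m)) (hE : IsCondExp (N : Set (Mat (Fin m))) E)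
    (ρ σ : Mat (Fin m)) (hρ : IsDensity ρ) (hσ : IsDensity σ)
    (hσN : σ ∈ (N : Set (Mat (Fin m)))) (hsupp : suppLe ρ σ) :
    Dp 1 ρ σ = Dp 1 ρ (E ρ) + Dp 1 (E ρ) σ := by
  obtain ⟨hE1, hE2, hE3⟩ := hE
  set X := E ρ with hX
  have hXN : X ∈ N := hE1 ρ
  have hρH : ρᴴ = ρ := hρ.1.isHermitian
  have hσH : σ.IsHermitian := hσ.1.isHermitian
  have hl : ∀ y ∈ N, (Xᴴ * y).trace = (ρ * y).trace := fun y hy => by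
    have := hE3 ρ y hy
    rwa [hρH] at this
  have hr : ∀ y ∈ N, (X * y).trace = (ρ * y).trace := fun y hy => by
    have h := congrArg star (hl (star y) (star_mem hy))
    rw [← Matrix.trace_conjTranspose, ← Matrix.trace_conjTranspose, Matrix.conjTranspose_mul,
      Matrix.conjTranspose_mul, Matrix.star_eq_conjTranspose, Matrix.conjTranspose_conjTranspose,
      Matrix.conjTranspose_conjTranspose, hρH, Matrix.trace_mul_comm, Matrix.trace_mul_comm y] at h
    exact h
  have hXH : Xᴴ = X := by
    have hmem : X - Xᴴ ∈ N := sub_mem hXN (star_mem hXN)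
    have h0 : ((X - Xᴴ) * (X - Xᴴ)ᴴ).trace = 0 := by
      have hm : (X - Xᴴ)ᴴ ∈ N := star_mem hmem
      generalize (X - Xᴴ)ᴴ = y at hm
      rw [sub_mul, Matrix.trace_sub, hl y hm, hr y hm, sub_self]
    rw [Matrix.trace_mul_conjTranspose_self_eq_zero_iff] at h0
    exact (sub_eq_zero.1 h0).symm
  have hs1 : suppLe ρ X := by
    obtain ⟨q, r, hqN, hqH, hqq, hXq, hqr⟩ := aux_proj N X hXH hXN
    have ht : (ρ * q).trace = 0 := by rw [← hr q hqN, hXq, Matrix.trace_zero]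
    obtain ⟨B, hB⟩ := aux_factor ρ hρ.1
    have hBq : B * q = 0 := by
      rw [← Matrix.trace_conjTranspose_mul_self_eq_zero_iff, Matrix.conjTranspose_mul, hqH,
        Matrix.mul_assoc, ← Matrix.mul_assoc Bᴴ, ← hB, Matrix.trace_mul_comm, Matrix.mul_assoc,
        hqq, ht]
    have hρq : ρ * q = 0 := by rw [hB, Matrix.mul_assoc, hBq, Matrix.mul_zero]
    have hρr : ρ = ρ * r * X := by
      calc ρ = ρ * (q + r * X) := by rw [hqr, Matrix.mul_one]
        _ = ρ * r * X := by rw [Matrix.mul_add, hρq, zero_add, Matrix.mul_assoc]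
    intro v hv
    rw [hρr, ← Matrix.mulVec_mulVec, hv, Matrix.mulVec_zero]
  have hs2 : suppLe X σ := by
    obtain ⟨q, r, hqN, hqH, hqq, hσq, hqr⟩ := aux_proj N σ hσH hσN
    have hρq : ρ * q = 0 := by
      apply Matrix.ext_of_mulVec_single
      intro i
      rw [← Matrix.mulVec_mulVec, Matrix.zero_mulVec]
      apply hsupp
      rw [Matrix.mulVec_mulVec, hσq, Matrix.zero_mulVec]
    have hqρ : q * ρ = 0 := by
      have := congrArg Matrix.conjTranspose hρq
      rwa [Matrix.conjTranspose_mul, hqH, hρH, Matrix.conjTranspose_zero] at this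
    have hXq : X * q = 0 := by
      rw [← Matrix.trace_conjTranspose_mul_self_eq_zero_iff, Matrix.conjTranspose_mul, hqH, hXH,
        Matrix.mul_assoc, Matrix.trace_mul_comm, Matrix.mul_assoc, Matrix.mul_assoc, hqq,
        hr _ (mul_mem hXN hqN), ← Matrix.mul_assoc, Matrix.trace_mul_comm, ← Matrix.mul_assoc,
        hqρ, Matrix.zero_mul, Matrix.trace_zero]
    have hXr : X = X * r * σ := by
      calc X = X * (q + r * σ) := by rw [hqr, Matrix.mul_one]
        _ = X * r * σ := by rw [Matrix.mul_add, hXq, zero_add, Matrix.mul_assoc]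
    intro v hv
    rw [hXr, ← Matrix.mulVec_mulVec, hv, Matrix.mulVec_zero]
  have e1 := hr (mlog X) (aux_cfc_mem N X hXH hXN _)
  have e2 := hr (mlog σ) (aux_cfc_mem N σ hσH hσN _)
  simp only [Dp, ENNReal.one_ne_top, if_false, if_true, DU, hs1, hs2, hsupp]
  rw [← EReal.coe_add]
  congr 1
  simp only [traceR, Matrix.trace_sub, Complex.sub_re, e1, e2]
  ring

end GJL
end
end

section
/- Let N ⊆ M_m be a unital *-subalgebra, p ∈ [1/2, ∞] and ρ ∈ M_m a density. Then D_p(ρ‖N) ≥ 0, and D_p(ρ‖N) = 0 if and only if ρ ∈ N. -/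
open scoped ENNReal Classical ComplexOrder
open Matrix

noncomputable section

namespace GJL

variable {n : Type*} [Fintype n] [DecidableEq n]

open Filter Topology in
open scoped Matrix.Norms.L2Operator in
lemma tendsto_cfc' {A : ℕ → Mat n} {A₀ : Mat n} (f : ℝ → ℝ) (hf : Continuous f)
    (hA : ∀ k, (A k).IsHermitian) (hA₀ : A₀.IsHermitian)
    (h : Tendsto A atTop (𝓝 A₀)) :
    Tendsto (fun k => cfc f (A k)) atTop (𝓝 (cfc f A₀)) := by
  obtain ⟨C, hC⟩ := (Metric.isBounded_range_of_tendsto A h).exists_norm_le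
  have hs : IsCompact (Metric.closedBall (0:ℝ) ((max C ‖A₀‖) * ‖(1 : Mat n)‖)) :=
    isCompact_closedBall _ _
  have key : ∀ B : Mat n, ‖B‖ ≤ max C ‖A₀‖ →
      spectrum ℝ B ⊆ Metric.closedBall (0:ℝ) ((max C ‖A₀‖) * ‖(1 : Mat n)‖) := fun B hB =>
    (spectrum.subset_closedBall_norm_mul B).trans
      (Metric.closedBall_subset_closedBall (by gcongr))
  refine Filter.Tendsto.cfc (p := IsSelfAdjoint) hs f h ?_ ?_ ?_ hA₀ hf.continuousOn
  · exact Filter.Eventually.of_forall fun k =>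
      key _ ((hC _ ⟨k, rfl⟩).trans (le_max_left _ _))
  · exact Filter.Eventually.of_forall fun k => hA k
  · exact key _ (le_max_right _ _)

lemma traceR_continuous : Continuous (traceR : Mat n → ℝ) :=
  Complex.continuous_re.comp (continuous_id.matrix_trace)

lemma contOn_fin {A : Mat n} (f : ℝ → ℝ) : ContinuousOn f (spectrum ℝ A) :=
  (Matrix.finite_real_spectrum (A := A)).continuousOn f

lemma cfc_mul' (f g : ℝ → ℝ) (A : Mat n) : cfc (fun x => f x * g x) A = cfc f A * cfc g A :=
  cfc_mul f g A (contOn_fin f) (contOn_fin g)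

lemma cfc_comp'' (f g : ℝ → ℝ) (A : Mat n) (hA : A.IsHermitian) :
    cfc (fun x => g (f x)) A = cfc g (cfc f A) := by
  refine cfc_comp' g f A ?_ (contOn_fin f) hA
  exact ((Matrix.finite_real_spectrum (A := A)).image f).continuousOn g

lemma cfc_herm (f : ℝ → ℝ) (A : Mat n) : (cfc f A).IsHermitian :=
  cfc_predicate (p := IsSelfAdjoint) f A

lemma cfc_id'' {A : Mat n} (hA : A.IsHermitian) : cfc (fun x : ℝ => x) A = A := cfc_id' ℝ A hA

lemma cfc_congr' {A : Mat n} (hA : A.PosSemidef) {f g : ℝ → ℝ} (h : ∀ x, 0 ≤ x → f x = g x) :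
    cfc f A = cfc g A := by
  refine cfc_congr fun x hx => h x ?_
  rw [hA.1.spectrum_real_eq_range_eigenvalues] at hx
  obtain ⟨i, rfl⟩ := hx
  exact hA.eigenvalues_nonneg i

lemma traceR_sub (A B : Mat n) : traceR (A - B) = traceR A - traceR B := by
  simp [traceR]

lemma traceR_mul_comm (A B : Mat n) : traceR (A * B) = traceR (B * A) := by
  simp [traceR, Matrix.trace_mul_comm A B]

/-- The joint spectral weights of two hermitian matrices. -/
lemma exists_weights {A B : Mat n} (hA : A.IsHermitian) (hB : B.IsHermitian) :
    ∃ w : n → n → ℝ, (∀ i j, 0 ≤ w i j) ∧ ∀ f g : ℝ → ℝ,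
      traceR (cfc f A * cfc g B) =
        ∑ i, ∑ j, w i j * (f (hA.eigenvalues i) * g (hB.eigenvalues j)) := by
  set U : Mat n := (hA.eigenvectorUnitary : Mat n)
  set V : Mat n := (hB.eigenvectorUnitary : Mat n)
  refine ⟨fun i j => Complex.normSq ((Uᴴ * V) i j), fun i j => Complex.normSq_nonneg _, ?_⟩
  intro f g
  rw [hA.cfc_eq, hB.cfc_eq, IsHermitian.cfc, IsHermitian.cfc, Unitary.conjStarAlgAut_apply,
    Unitary.conjStarAlgAut_apply]
  change traceR (U * diagonal (RCLike.ofReal ∘ f ∘ hA.eigenvalues) * Uᴴ *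
    (V * diagonal (RCLike.ofReal ∘ g ∘ hB.eigenvalues) * Vᴴ)) = _
  have : traceR (U * diagonal (RCLike.ofReal ∘ f ∘ hA.eigenvalues) * Uᴴ *
    (V * diagonal (RCLike.ofReal ∘ g ∘ hB.eigenvalues) * Vᴴ)) =
      traceR ((diagonal (RCLike.ofReal ∘ f ∘ hA.eigenvalues) * (Uᴴ * V)) *
        (diagonal (RCLike.ofReal ∘ g ∘ hB.eigenvalues) * (Uᴴ * V)ᴴ)) := by
    rw [conjTranspose_mul, conjTranspose_conjTranspose, traceR_mul_comm]
    rw [show (V * diagonal (RCLike.ofReal ∘ g ∘ hB.eigenvalues) * Vᴴ *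
      (U * diagonal (RCLike.ofReal ∘ f ∘ hA.eigenvalues) * Uᴴ)) = 
      (V * diagonal (RCLike.ofReal ∘ g ∘ hB.eigenvalues) * Vᴴ * U) *
      (diagonal (RCLike.ofReal ∘ f ∘ hA.eigenvalues) * Uᴴ) by simp only [Matrix.mul_assoc],
      traceR_mul_comm]
    congr 1
    simp only [Matrix.mul_assoc]
  rw [this]
  generalize Uᴴ * V = W
  simp only [traceR, Matrix.trace, Matrix.diag_apply, Matrix.mul_apply (M := diagonal _ * W),
    Matrix.diagonal_mul, Complex.re_sum, conjTranspose_apply]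
  refine Finset.sum_congr rfl fun i _ => Finset.sum_congr rfl fun j _ => ?_
  simp [Complex.normSq_apply]
  ring

lemma eq_zero_of_traceR_sq {X : Mat n} (hX : X.IsHermitian) (h : traceR (X * X) = 0) : X = 0 := by
  have h2 : (Xᴴ * X).PosSemidef := posSemidef_conjTranspose_mul_self X
  have h3 : (Xᴴ * X).trace = 0 := by
    apply Complex.ext
    · simpa [traceR, hX.eq] using h
    · have := h2.trace_nonneg
      simpa using (Complex.le_def.1 this).2.symm
  exact Matrix.trace_conjTranspose_mul_self_eq_zero_iff.1 h3

lemma traceR_cfc_left {A B : Mat n} {hA : A.IsHermitian} {hB : B.IsHermitian} {w : n → n → ℝ}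
    (hw : ∀ f g : ℝ → ℝ, traceR (cfc f A * cfc g B) =
        ∑ i, ∑ j, w i j * (f (hA.eigenvalues i) * g (hB.eigenvalues j))) (f : ℝ → ℝ) :
    traceR (cfc f A) = ∑ i, ∑ j, w i j * f (hA.eigenvalues i) := by
  have := hw f (fun _ => 1)
  rw [cfc_const_one (p := IsSelfAdjoint) ℝ B hB] at this
  simpa using this

lemma traceR_cfc_right {A B : Mat n} {hA : A.IsHermitian} {hB : B.IsHermitian} {w : n → n → ℝ}
    (hw : ∀ f g : ℝ → ℝ, traceR (cfc f A * cfc g B) =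
        ∑ i, ∑ j, w i j * (f (hA.eigenvalues i) * g (hB.eigenvalues j))) (g : ℝ → ℝ) :
    traceR (cfc g B) = ∑ i, ∑ j, w i j * g (hB.eigenvalues j) := by
  have := hw (fun _ => 1) g
  rw [cfc_const_one (p := IsSelfAdjoint) ℝ A hA] at this
  simpa using this

lemma eq_of_weights {A B : Mat n} {hA : A.IsHermitian} {hB : B.IsHermitian} {w : n → n → ℝ}
    (hw : ∀ f g : ℝ → ℝ, traceR (cfc f A * cfc g B) =
        ∑ i, ∑ j, w i j * (f (hA.eigenvalues i) * g (hB.eigenvalues j))) (f g : ℝ → ℝ)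
    (h : ∀ i j, w i j ≠ 0 → f (hA.eigenvalues i) = g (hB.eigenvalues j)) :
    cfc f A = cfc g B := by
  rw [← sub_eq_zero]
  apply eq_zero_of_traceR_sq ((cfc_herm f A).sub (cfc_herm g B))
  have e1 : (cfc f A - cfc g B) * (cfc f A - cfc g B) =
     (cfc f A * cfc f A - cfc f A * cfc g B) - (cfc g B * cfc f A - cfc g B * cfc g B) := by
    noncomm_ring
  rw [e1, traceR_sub, traceR_sub, traceR_sub, traceR_mul_comm (cfc g B) (cfc f A), ← cfc_mul',
    ← cfc_mul', traceR_cfc_left hw, traceR_cfc_right hw, hw]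
  simp only [← Finset.sum_sub_distrib]
  refine Finset.sum_eq_zero fun i _ => Finset.sum_eq_zero fun j _ => ?_
  by_cases h0 : w i j = 0
  · simp [h0]
  · rw [h i j h0]; ring

/-- Two-variable trace inequality: sums with nonneg weights; equality case. -/
lemma weights_sum_eq_zero {ι κ : Type*} [Fintype ι] [Fintype κ] {w h : ι → κ → ℝ} (hw : ∀ i j, 0 ≤ w i j)
    (hh : ∀ i j, 0 ≤ h i j) (hs : ∑ i, ∑ j, w i j * h i j ≤ 0) :
    ∀ i j, w i j ≠ 0 → h i j = 0 := by
  intro i j hij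
  have h1 : ∀ i, 0 ≤ ∑ j, w i j * h i j := fun i =>
    Finset.sum_nonneg fun j _ => mul_nonneg (hw i j) (hh i j)
  have h2 := (Finset.sum_eq_zero_iff_of_nonneg (fun i _ => h1 i)).1
    (le_antisymm hs (Finset.sum_nonneg fun i _ => h1 i)) i (Finset.mem_univ i)
  have h3 := (Finset.sum_eq_zero_iff_of_nonneg
    (fun j _ => mul_nonneg (hw i j) (hh i j))).1 h2 j (Finset.mem_univ j)
  exact (mul_eq_zero.1 h3).resolve_left hij

lemma amgm {a x y : ℝ} (ha : 0 < a) (ha' : a < 1) (hx : 0 ≤ x) (hy : 0 ≤ y) :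
    x ^ a * y ^ (1 - a) ≤ a * x + (1 - a) * y ∧
    (x ^ a * y ^ (1 - a) = a * x + (1 - a) * y → x = y) := by
  refine ⟨Real.geom_mean_le_arith_mean2_weighted ha.le (by linarith) hx hy (by ring), fun h => ?_⟩
  have := (Real.geom_mean_eq_arith_mean_weighted_iff_of_pos (Finset.univ : Finset (Fin 2))
    ![a, 1 - a] ![x, y] (by simp [Fin.forall_fin_two, ha, ha']) (by simp)
    (by simp [Fin.forall_fin_two, hx, hy])).1 (by simpa using h)
  simpa using this 0 (by simp) 1 (by simp)

lemma norm_entry_le {A : Mat n} (hA : A.PosSemidef) (i j : n) : ‖A i j‖ ≤ traceR A := by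
  have e1 : traceR A = ∑ i, hA.1.eigenvalues i := by
    simp [traceR, hA.1.trace_eq_sum_eigenvalues]
  have e2 : traceR (A * A) = ∑ i, (hA.1.eigenvalues i) ^ 2 := by
    have h : A * A = cfc (fun x : ℝ => x * x) A := by rw [cfc_mul', cfc_id'' hA.1]
    rw [h, hA.1.cfc_eq, IsHermitian.cfc, Unitary.conjStarAlgAut_apply, traceR_mul_comm,
      ← Matrix.mul_assoc]
    simp [traceR, Matrix.trace, sq]
  have e3 : ‖A i j‖ ^ 2 ≤ traceR (A * A) := by
    have : traceR (A * A) = ∑ i, ∑ j, ‖A i j‖ ^ 2 := by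
      have h : traceR (A * A) = traceR (A * Aᴴ) := by rw [hA.1.eq]
      rw [h]
      simp only [traceR, Matrix.trace, Matrix.diag_apply, Matrix.mul_apply, Complex.re_sum,
        conjTranspose_apply]
      refine Finset.sum_congr rfl fun i _ => Finset.sum_congr rfl fun j _ => ?_
      rw [← Complex.normSq_eq_norm_sq]
      simp [Complex.normSq_apply]
    rw [this]
    exact (Finset.single_le_sum (f := fun j => ‖A i j‖ ^ 2) (fun j _ => sq_nonneg _)
      (Finset.mem_univ j)).trans
      (Finset.single_le_sum (f := fun i => ∑ j, ‖A i j‖ ^ 2)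
        (fun i _ => Finset.sum_nonneg fun j _ => sq_nonneg _) (Finset.mem_univ i))
  have h0 : ∀ i, 0 ≤ hA.1.eigenvalues i := hA.eigenvalues_nonneg
  have e4 : ∑ i, (hA.1.eigenvalues i) ^ 2 ≤ (∑ i, hA.1.eigenvalues i) ^ 2 :=
    Finset.sum_sq_le_sq_sum_of_nonneg fun i _ => h0 i
  have h5 : 0 ≤ ∑ i, hA.1.eigenvalues i := Finset.sum_nonneg fun i _ => h0 i
  refine abs_le_of_sq_le_sq' ?_ (by rw [e1]; exact h5) |>.2
  rw [e1]; linarith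

lemma isClosed_psd : IsClosed {A : Mat n | A.PosSemidef} := by
  simp only [posSemidef_iff_dotProduct_mulVec, Set.ofPred_and, Set.ofPred_forall]
  refine IsClosed.inter ?_ (isClosed_iInter fun x => ?_)
  · exact isClosed_eq continuous_id.matrix_conjTranspose continuous_id
  · have : Continuous fun A : Mat n => star x ⬝ᵥ A.mulVec x :=
      continuous_const.dotProduct (continuous_id.matrix_mulVec continuous_const)
    exact isClosed_le continuous_const this

lemma compact_psd (C : ℝ) : IsCompact {A : Mat n | A.PosSemidef ∧ traceR A ≤ C} := by
  have hc : IsCompact (Set.univ.pi fun _ : n => Set.univ.pi fun _ : n => Metric.closedBall (0:ℂ) C) :=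
    isCompact_univ_pi fun _ => isCompact_univ_pi fun _ => isCompact_closedBall _ _
  refine hc.of_isClosed_subset ?_ ?_
  · exact isClosed_psd.inter (isClosed_le traceR_continuous continuous_const)
  · rintro A ⟨hA, hAt⟩
    simp only [Set.mem_pi, Set.mem_univ, forall_true_left, mem_closedBall_zero_iff]
    exact fun i j => (norm_entry_le hA i j).trans hAt

lemma eq_zero_of_psd {A : Mat n} (hA : A.PosSemidef) (h : traceR A ≤ 0) : A = 0 := by
  ext i j
  exact norm_le_zero_iff.1 ((norm_entry_le hA i j).trans h)

instance firstCountable_mat : FirstCountableTopology (Mat n) :=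
  inferInstanceAs (FirstCountableTopology (n → n → ℂ))

/-- Indicator of the nonzero reals. -/
def chi (x : ℝ) : ℝ := if x = 0 then 0 else 1

/-- Support projection. -/
def sproj (σ : Mat n) : Mat n := cfc chi σ

lemma proj_of_suppLe {ρ σ : Mat n} (hσ : σ.IsHermitian) (h : suppLe ρ σ) :
    ρ * sproj σ = ρ := by
  have h1 : σ * (1 - sproj σ) = 0 := by
    have : σ * sproj σ = σ := by
      have e : cfc (fun x : ℝ => x) σ * sproj σ = cfc (fun x : ℝ => x) σ := by
        rw [sproj, ← cfc_mul']
        congr 1; ext x; by_cases hx : x = 0 <;> simp [chi, hx]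
      rwa [cfc_id'' hσ] at e
    rw [mul_sub, this, mul_one, sub_self]
  have h2 : ρ * (1 - sproj σ) = 0 := by
    ext i j
    have := h ((1 - sproj σ).col j) (by
      ext k; have := congrFun (congrFun h1 k) j
      simpa [Matrix.mul_apply, Matrix.mulVec, dotProduct] using this)
    have := congrFun this i
    simpa [Matrix.mul_apply, Matrix.mulVec, dotProduct] using this
  rw [mul_sub, mul_one, sub_eq_zero] at h2
  exact h2.symm

lemma proj_mul {ρ σ : Mat n} (hρ : ρ.IsHermitian) (h : ρ * sproj σ = ρ) : sproj σ * ρ = ρ := by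
  have := congrArg conjTranspose h
  rwa [conjTranspose_mul, hρ.eq, show (sproj σ)ᴴ = sproj σ from (cfc_herm chi σ).eq] at this

lemma mpow_mpow_inv {A : Mat n} (hA : A.PosSemidef) {p : ℝ} (hp : p ≠ 0) :
    mpow (mpow A p) (1 / p) = A := by
  unfold mpow
  rw [← cfc_comp'' (fun x => x ^ p) (fun x => x ^ (1 / p)) A hA.1]
  conv_rhs => rw [← cfc_id'' hA.1]
  refine cfc_congr' hA fun x hx => ?_
  rw [one_div, Real.rpow_rpow_inv hx hp]

lemma mpow_psd {A : Mat n} (hA : A.PosSemidef) (p : ℝ) : (mpow A p).PosSemidef := by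
  have : mpow A p = cfc (fun x : ℝ => x ^ (p / 2)) A * (cfc (fun x : ℝ => x ^ (p / 2)) A)ᴴ := by
    rw [(cfc_herm _ A).eq, ← cfc_mul']
    refine cfc_congr' hA fun x hx => ?_
    rcases hx.eq_or_lt with rfl | hx
    · by_cases hp : p = 0
      · simp [hp]
      · rw [Real.zero_rpow hp, Real.zero_rpow (by simpa using hp)]; simp
    · rw [← Real.rpow_add hx]; ring_nf
  rw [this]
  exact posSemidef_self_mul_conjTranspose _

lemma traceR_nonneg {A : Mat n} (hA : A.PosSemidef) : 0 ≤ traceR A :=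
  (Complex.le_def.1 hA.trace_nonneg).1

lemma sandwich_psd {ρ : Mat n} (hρ : ρ.PosSemidef) (σ : Mat n) (p : ℝ) :
    (sandwich p ρ σ).PosSemidef := by
  have := hρ.mul_mul_conjTranspose_same (mpow σ ((1 - p)/(2*p)))
  rwa [show (mpow σ ((1 - p)/(2*p)))ᴴ = mpow σ ((1 - p)/(2*p)) from (cfc_herm _ σ).eq] at this

lemma young_gt {p : ℝ} (hp : 1 < p) {A σ : Mat n} (hA : A.PosSemidef) (hσ : σ.PosSemidef) :
    traceR (A * mpow σ (1 - 1 / p)) ≤ (1 / p) * traceR (mpow A p) + (1 - 1 / p) * traceR σ ∧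
    ((1 / p) * traceR (mpow A p) + (1 - 1 / p) * traceR σ ≤ traceR (A * mpow σ (1 - 1 / p)) →
      mpow A p = σ) := by
  obtain ⟨w, hw, hw'⟩ := exists_weights hA.1 hσ.1
  have hp0 : 0 < p := by linarith
  set h : n → n → ℝ := fun i j => (1 / p) * hA.1.eigenvalues i ^ p +
    (1 - 1 / p) * hσ.1.eigenvalues j - hA.1.eigenvalues i * hσ.1.eigenvalues j ^ (1 - 1 / p)
    with hdef
  have key : ∀ i j, 0 ≤ h i j ∧ (h i j = 0 → hA.1.eigenvalues i ^ p = hσ.1.eigenvalues j) := by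
    intro i j
    have ha := hA.eigenvalues_nonneg i
    have hs := hσ.eigenvalues_nonneg j
    have := amgm (a := 1 / p) (by positivity) (by rw [div_lt_one hp0]; exact hp)
      (Real.rpow_nonneg ha p) hs
    rw [one_div, Real.rpow_rpow_inv ha hp0.ne', ← one_div] at this
    exact ⟨by simp only [hdef]; linarith [this.1], fun h0 => this.2 (by simp only [hdef] at h0; linarith)⟩
  have hsum : ∑ i, ∑ j, w i j * h i j = (1 / p) * traceR (mpow A p) + (1 - 1 / p) * traceR σ -
      traceR (A * mpow σ (1 - 1 / p)) := by
    have e1 := hw' (fun x => x) (fun x => x ^ (1 - 1 / p))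
    rw [cfc_id'' hA.1] at e1
    have e2 := traceR_cfc_right hw' (fun x => x)
    rw [cfc_id'' hσ.1] at e2
    have e3 := traceR_cfc_left hw' (fun x => x ^ p)
    rw [mpow, mpow, e1, e2, e3]
    simp only [Finset.mul_sum, ← Finset.sum_sub_distrib, ← Finset.sum_add_distrib, hdef]
    refine Finset.sum_congr rfl fun i _ => Finset.sum_congr rfl fun j _ => ?_
    ring
  constructor
  · have : 0 ≤ ∑ i, ∑ j, w i j * h i j := Finset.sum_nonneg fun i _ => Finset.sum_nonneg fun j _ =>
      mul_nonneg (hw i j) (key i j).1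
    linarith
  · intro hle
    have h0 := weights_sum_eq_zero hw (fun i j => (key i j).1) (by linarith)
    have := eq_of_weights hw' (fun x => x ^ p) (fun x => x) (fun i j hij => (key i j).2 (h0 i j hij))
    rw [cfc_id'' hσ.1] at this
    exact this

lemma young_lt {p : ℝ} (hp0 : 0 < p) (hp : p < 1) {A σ : Mat n} (hA : A.PosSemidef)
    (hσ : σ.PosSemidef) (hAP : A * sproj σ = A) :
    traceR (mpow A p) ≤ p * traceR (A * mpow σ (-((1 - p) / p))) + (1 - p) * traceR σ ∧
    (p * traceR (A * mpow σ (-((1 - p) / p))) + (1 - p) * traceR σ ≤ traceR (mpow A p) →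
      mpow A p = σ) := by
  obtain ⟨w, hw, hw'⟩ := exists_weights hA.1 hσ.1
  set h : n → n → ℝ := fun i j =>
    p * (hA.1.eigenvalues i * hσ.1.eigenvalues j ^ (-((1 - p) / p))) +
    (1 - p) * hσ.1.eigenvalues j - 2 * (hA.1.eigenvalues i ^ p * chi (hσ.1.eigenvalues j)) +
    hA.1.eigenvalues i ^ p
    with hdef
  have key : ∀ i j, 0 ≤ h i j ∧ (h i j = 0 → hA.1.eigenvalues i ^ p = hσ.1.eigenvalues j) := by
    intro i j
    have ha := hA.eigenvalues_nonneg i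
    have hs := hσ.eigenvalues_nonneg j
    simp only [hdef]
    generalize hA.1.eigenvalues i = a at *
    generalize hσ.1.eigenvalues j = t at *
    rcases hs.eq_or_lt with rfl | ht
    · have : -((1 - p) / p) ≠ 0 := by
        have : 0 < (1 - p) / p := div_pos (by linarith) hp0
        linarith
      rw [Real.zero_rpow this]
      simp only [chi, if_true]
      simp [Real.rpow_nonneg ha]
    · have hx : 0 ≤ a * t ^ (-((1 - p) / p)) := by positivity
      have := amgm hp0 hp hx ht.le
      have e : (a * t ^ (-((1 - p) / p))) ^ p * t ^ (1 - p) = a ^ p := by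
        rw [Real.mul_rpow ha (by positivity), ← Real.rpow_mul ht.le, mul_assoc,
          ← Real.rpow_add ht]
        have : -((1 - p) / p) * p + (1 - p) = 0 := by field_simp; ring
        rw [this]; simp
      rw [e] at this
      simp only [chi, if_neg ht.ne']
      refine ⟨by linarith [this.1], fun h0 => ?_⟩
      have h1 := this.2 (by linarith)
      rw [h1] at h0
      linarith
  have hsum : ∑ i, ∑ j, w i j * h i j = p * traceR (A * mpow σ (-((1 - p) / p))) +
      (1 - p) * traceR σ - traceR (mpow A p) := by
    have e1 := hw' (fun x => x) (fun x => x ^ (-((1 - p) / p)))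
    rw [cfc_id'' hA.1] at e1
    have e2 := traceR_cfc_right hw' (fun x => x)
    rw [cfc_id'' hσ.1] at e2
    have e3 := traceR_cfc_left hw' (fun x => x ^ p)
    have e4 := hw' (fun x => x ^ p) chi
    have e5 : cfc (fun x : ℝ => x ^ p) A * cfc chi σ = cfc (fun x : ℝ => x ^ p) A := by
      have : cfc (fun x : ℝ => x ^ p) A = cfc (fun x : ℝ => x ^ (p - 1)) A * A := by
        conv_rhs => rw [← cfc_id'' hA.1]
        rw [← cfc_comp'' _ _ _ hA.1, ← cfc_mul']
        refine cfc_congr' hA fun x hx => ?_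
        rcases hx.eq_or_lt with rfl | hx
        · simp [Real.zero_rpow hp0.ne']
        · rw [Real.rpow_sub_one hx.ne']; field_simp
      rw [this, Matrix.mul_assoc]
      change _ * (A * sproj σ) = _
      rw [hAP]
    rw [e5] at e4
    have : traceR (mpow A p) = 2 * traceR (mpow A p) - traceR (mpow A p) := by ring
    rw [this, mpow, mpow]
    nth_rewrite 1 [e4]
    rw [e1, e2, e3]
    simp only [Finset.mul_sum, ← Finset.sum_sub_distrib, ← Finset.sum_add_distrib, hdef]
    refine Finset.sum_congr rfl fun i _ => Finset.sum_congr rfl fun j _ => ?_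
    ring
  constructor
  · have : 0 ≤ ∑ i, ∑ j, w i j * h i j := Finset.sum_nonneg fun i _ => Finset.sum_nonneg fun j _ =>
      mul_nonneg (hw i j) (key i j).1
    linarith
  · intro hle
    have h0 := weights_sum_eq_zero hw (fun i j => (key i j).1) (by linarith)
    have := eq_of_weights hw' (fun x => x ^ p) (fun x => x) (fun i j hij => (key i j).2 (h0 i j hij))
    rw [cfc_id'' hσ.1] at this
    exact this

lemma proj_trace {ρ σ : Mat n} (hρ : ρ.PosSemidef) (hσ : σ.PosSemidef) :
    traceR (ρ * sproj σ) ≤ traceR ρ ∧ (traceR ρ ≤ traceR (ρ * sproj σ) → ρ * sproj σ = ρ) := by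
  obtain ⟨w, hw, hw'⟩ := exists_weights hρ.1 hσ.1
  have e1 := hw' (fun x => x) chi
  have e2 := traceR_cfc_left hw' (fun x => x)
  rw [cfc_id'' hρ.1] at e1 e2
  set h : n → n → ℝ := fun i j => hρ.1.eigenvalues i * (1 - chi (hσ.1.eigenvalues j)) with hdef
  have key : ∀ i j, 0 ≤ h i j := fun i j => mul_nonneg (hρ.eigenvalues_nonneg i)
    (by unfold chi; split_ifs <;> norm_num)
  have hsum : ∑ i, ∑ j, w i j * h i j = traceR ρ - traceR (ρ * sproj σ) := by
    rw [sproj, e1, e2]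
    simp only [← Finset.sum_sub_distrib, hdef]
    refine Finset.sum_congr rfl fun i _ => Finset.sum_congr rfl fun j _ => ?_
    ring
  constructor
  · have : 0 ≤ ∑ i, ∑ j, w i j * h i j := Finset.sum_nonneg fun i _ => Finset.sum_nonneg fun j _ =>
      mul_nonneg (hw i j) (key i j)
    linarith
  · intro hle
    have h0 := weights_sum_eq_zero hw key (by linarith)
    have e3 := hw' (fun x => x * x) (fun x => (1 - chi x) * (1 - chi x))
    rw [Finset.sum_eq_zero fun i _ => Finset.sum_eq_zero fun j _ => ?_] at e3
    swap
    · by_cases hij : w i j = 0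
      · simp [hij]
      · have := h0 i j hij
        simp only [hdef] at this
        rw [show hρ.1.eigenvalues i * hρ.1.eigenvalues i *
          ((1 - chi (hσ.1.eigenvalues j)) * (1 - chi (hσ.1.eigenvalues j))) =
          (hρ.1.eigenvalues i * (1 - chi (hσ.1.eigenvalues j))) *
          (hρ.1.eigenvalues i * (1 - chi (hσ.1.eigenvalues j))) by ring, this]
        simp
    have hc : cfc (fun x => 1 - chi x) σ = 1 - sproj σ := by
      rw [sproj, cfc_sub (fun _ => (1:ℝ)) chi σ (contOn_fin _) (contOn_fin _),
        cfc_const_one (p := IsSelfAdjoint) ℝ σ hσ.1]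
    rw [cfc_mul', cfc_mul', cfc_id'' hρ.1, hc] at e3
    have hP : (1 - sproj σ)ᴴ = 1 - sproj σ := by
      rw [← hc]; exact cfc_herm _ _
    have e4 : ((ρ * (1 - sproj σ))ᴴ * (ρ * (1 - sproj σ))).trace = 0 := by
      apply Complex.ext
      · rw [conjTranspose_mul, hP, hρ.1.eq]
        change traceR _ = 0
        rw [traceR_mul_comm, ← e3, ← Matrix.mul_assoc, Matrix.mul_assoc ρ, traceR_mul_comm,
          ← Matrix.mul_assoc, traceR_mul_comm]
      · have := (posSemidef_conjTranspose_mul_self (ρ * (1 - sproj σ))).trace_nonneg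
        simpa using (Complex.le_def.1 this).2.symm
    have e5 := Matrix.trace_conjTranspose_mul_self_eq_zero_iff.1 e4
    rw [mul_sub, mul_one, sub_eq_zero] at e5
    exact e5.symm

lemma recover {p : ℝ} (hp : 0 < p) {A σ : Mat n} (hA : A.PosSemidef) (hσ : σ.PosSemidef)
    (h : mpow A p = σ) :
    mpow σ (-((1 - p) / (2 * p))) * A * mpow σ (-((1 - p) / (2 * p))) = σ := by
  have hA' : A = mpow σ (1 / p) := by rw [← h, mpow_mpow_inv hA hp.ne']
  rw [hA']
  conv_rhs => rw [← cfc_id'' hσ.1]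
  unfold mpow
  rw [← cfc_mul', ← cfc_mul']
  refine cfc_congr' hσ fun x hx => ?_
  rcases hx.eq_or_lt with rfl | hx
  · rw [Real.zero_rpow (x := 1 / p) (by positivity)]; simp
  · rw [← Real.rpow_add hx, ← Real.rpow_add hx]
    have : -((1 - p) / (2 * p)) + 1 / p + -((1 - p) / (2 * p)) = 1 := by field_simp; ring
    rw [this, Real.rpow_one]

lemma mpow_neg_mul {σ : Mat n} (hσ : σ.PosSemidef) {s : ℝ} (hs : s ≠ 0) :
    mpow σ (-s) * mpow σ s = sproj σ := by
  unfold mpow sproj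
  rw [← cfc_mul']
  refine cfc_congr' hσ fun x hx => ?_
  rcases hx.eq_or_lt with rfl | hx
  · rw [Real.zero_rpow hs]; simp [chi]
  · rw [← Real.rpow_add hx]; simp [chi, hx.ne']

lemma mpow_mul_proj (σ : Mat n) {s : ℝ} (hs : s ≠ 0) : mpow σ s * sproj σ = mpow σ s := by
  unfold mpow sproj
  rw [← cfc_mul']
  congr 1; ext x
  by_cases hx : x = 0
  · simp [hx, Real.zero_rpow hs]
  · simp [chi, hx]

lemma mpow_comm (σ : Mat n) (s t : ℝ) : mpow σ s * mpow σ t = mpow σ t * mpow σ s := by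
  unfold mpow
  rw [← cfc_mul', ← cfc_mul']
  congr 1; ext x; ring

lemma mpow_add' {σ : Mat n} (hσ : σ.PosSemidef) {s t : ℝ} (hs : s ≠ 0) (hst : s + t ≠ 0) :
    mpow σ s * mpow σ t = mpow σ (s + t) := by
  unfold mpow
  rw [← cfc_mul']
  refine cfc_congr' hσ fun x hx => ?_
  rcases hx.eq_or_lt with rfl | hx
  · rw [Real.zero_rpow hs, Real.zero_rpow hst]; simp
  · rw [← Real.rpow_add hx]

/-- Reconstruct `ρ` from the sandwiched matrix. -/
lemma unsandwich {ρ σ : Mat n} (hρ : ρ.IsHermitian) (hσ : σ.PosSemidef) {p : ℝ} (hp : 0 < p)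
    (hp1 : p ≠ 1) (h : ρ * sproj σ = ρ) :
    mpow σ (-((1 - p) / (2 * p))) * sandwich p ρ σ * mpow σ (-((1 - p) / (2 * p))) = ρ := by
  have hs : (1 - p) / (2 * p) ≠ 0 := div_ne_zero (sub_ne_zero.2 hp1.symm) (by positivity)
  unfold sandwich
  set s := (1 - p) / (2 * p)
  have : mpow σ (-s) * (mpow σ s * ρ * mpow σ s) * mpow σ (-s) =
    (mpow σ (-s) * mpow σ s) * ρ * (mpow σ s * mpow σ (-s)) := by simp only [Matrix.mul_assoc]
  rw [this, mpow_comm σ s, mpow_neg_mul hσ hs, proj_mul hρ h, h]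

lemma density_traceR {ρ : Mat n} (h : IsDensity ρ) : traceR ρ = 1 := by simp [traceR, h.2]

/-- Value of `Tr ρ` in terms of sandwiched matrix. -/
lemma trace_unsandwich {A σ : Mat n} (hσ : σ.PosSemidef) {p : ℝ} (hp : 0 < p) (hp1 : p ≠ 1) :
    traceR (mpow σ (-((1 - p) / (2 * p))) * A * mpow σ (-((1 - p) / (2 * p)))) =
      traceR (A * mpow σ (-((1 - p) / p))) := by
  have hs : (1 - p) / (2 * p) ≠ 0 := div_ne_zero (sub_ne_zero.2 hp1.symm) (by positivity)
  have e : -((1 - p) / p) = -((1 - p) / (2 * p)) + -((1 - p) / (2 * p)) := by field_simp; ring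
  have hs' : (1 - p) / p ≠ 0 := div_ne_zero (sub_ne_zero.2 hp1.symm) (by positivity)
  rw [e, ← mpow_add' hσ (neg_ne_zero.2 hs) (by rw [← e]; exact neg_ne_zero.2 hs'),
    Matrix.mul_assoc, traceR_mul_comm, Matrix.mul_assoc]

lemma Q_lt {p : ℝ} (hp0 : 0 < p) (hp : p < 1) {ρ σ : Mat n} (hρ : IsDensity ρ) (hσ : IsDensity σ) :
    traceR (mpow (sandwich p ρ σ) p) ≤ 1 ∧
    (1 ≤ traceR (mpow (sandwich p ρ σ) p) → ρ = σ) := by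
  have hs : (1 - p) / (2 * p) ≠ 0 := (div_pos (by linarith) (by positivity)).ne'
  have hA := sandwich_psd hρ.1 σ p
  have hAP : sandwich p ρ σ * sproj σ = sandwich p ρ σ := by
    rw [sandwich, Matrix.mul_assoc, mpow_mul_proj σ hs]
  have hy := young_lt hp0 hp hA hσ.1 hAP
  have ht : traceR (sandwich p ρ σ * mpow σ (-((1 - p) / p))) = traceR (ρ * sproj σ) := by
    rw [← trace_unsandwich hσ.1 hp0 hp.ne]
    unfold sandwich
    set s := (1 - p) / (2 * p)
    have : mpow σ (-s) * (mpow σ s * ρ * mpow σ s) * mpow σ (-s) =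
      (mpow σ (-s) * mpow σ s) * (ρ * (mpow σ s * mpow σ (-s))) := by simp only [Matrix.mul_assoc]
    rw [this, mpow_comm σ s, mpow_neg_mul hσ.1 hs, traceR_mul_comm, Matrix.mul_assoc]
    congr 2
    unfold sproj
    rw [← cfc_mul']; congr 1; ext x; by_cases hx : x = 0 <;> simp [chi, hx]
  have hP := proj_trace hρ.1 hσ.1
  rw [ht, density_traceR hσ] at hy
  rw [density_traceR hρ] at hP
  have h1 := mul_le_mul_of_nonneg_left hP.1 hp0.le
  refine ⟨by linarith [hy.1], fun h => ?_⟩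
  have h2 := hy.2 (by linarith)
  have h3 := hP.2 (by
    have := hy.1
    have : p * 1 ≤ p * traceR (ρ * sproj σ) := by linarith
    exact le_of_mul_le_mul_left this hp0)
  rw [← unsandwich hρ.1.1 hσ.1 hp0 hp.ne h3, recover hp0 hA hσ.1 h2]

/-- Abstract equality case and bound for `p > 1`. -/
lemma Q_gt {p : ℝ} (hp : 1 < p) {A ρ σ : Mat n} (hA : A.PosSemidef) (hρ : IsDensity ρ)
    (hσ : IsDensity σ)
    (h : mpow σ (-((1 - p) / (2 * p))) * A * mpow σ (-((1 - p) / (2 * p))) = ρ) :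
    1 ≤ traceR (mpow A p) ∧ (traceR (mpow A p) ≤ 1 → ρ = σ) := by
  have hp0 : 0 < p := by linarith
  have ht := trace_unsandwich (A := A) hσ.1 hp0 hp.ne'
  rw [h, density_traceR hρ] at ht
  have hy := young_gt hp hA hσ.1
  rw [show 1 - 1 / p = -((1 - p) / p) by field_simp; ring, ← ht, density_traceR hσ] at hy
  have e : -((1 - p) / p) = 1 - 1 / p := by field_simp; ring
  rw [e] at hy
  have hip : 0 < 1 / p := by positivity
  refine ⟨?_, fun hle => ?_⟩
  · have : (1 / p) * 1 ≤ (1 / p) * traceR (mpow A p) := by linarith [hy.1]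
    exact le_of_mul_le_mul_left this hip
  · have := mul_le_mul_of_nonneg_left hle hip.le
    rw [← h, recover hp0 hA hσ.1 (hy.2 (by linarith))]

lemma klein {ρ σ : Mat n} (hρ : IsDensity ρ) (hσ : IsDensity σ) (h : suppLe ρ σ) :
    2 - 2 * traceR (mpow ρ (1/2) * mpow σ (1/2)) ≤ traceR (ρ * mlog ρ - ρ * mlog σ) := by
  obtain ⟨w, hw, hw'⟩ := exists_weights hρ.1.1 hσ.1.1
  have hP := proj_of_suppLe hσ.1.1 h
  have e1 : traceR (ρ * mlog ρ) = ∑ i, ∑ j, w i j *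
      (Real.log (hρ.1.1.eigenvalues i) * hρ.1.1.eigenvalues i * chi (hσ.1.1.eigenvalues j)) := by
    have := hw' (fun x => Real.log x * x) chi
    rw [cfc_mul', cfc_id'' hρ.1.1, Matrix.mul_assoc] at this
    change traceR (mlog ρ * (ρ * sproj σ)) = _ at this
    rw [hP, traceR_mul_comm] at this
    exact this
  have e2 := hw' (fun x => x) Real.log
  have e3 := hw' (fun x => x) chi
  rw [cfc_id'' hρ.1.1] at e2 e3
  change traceR (ρ * sproj σ) = _ at e3
  rw [hP, density_traceR hρ] at e3
  have e4 := hw' (fun x => x ^ (1/2 : ℝ)) (fun x => x ^ (1/2 : ℝ))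
  rw [traceR_sub, e1, mlog, e2, mpow, mpow, e4]
  have h2 : (2:ℝ) = 2 * ∑ i, ∑ j,
      w i j * (hρ.1.1.eigenvalues i * chi (hσ.1.1.eigenvalues j)) := by rw [← e3]; norm_num
  nth_rewrite 1 [h2]
  simp only [Finset.mul_sum, ← Finset.sum_sub_distrib]
  refine Finset.sum_le_sum fun i _ => Finset.sum_le_sum fun j _ => ?_
  have ha := hρ.1.eigenvalues_nonneg i
  have hs := hσ.1.eigenvalues_nonneg j
  have hwij := hw i j
  generalize hρ.1.1.eigenvalues i = r at *
  generalize hσ.1.1.eigenvalues j = t at *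
  suffices 2 * (r * chi t) - 2 * (r ^ (1/2 : ℝ) * t ^ (1/2 : ℝ)) ≤
      Real.log r * r * chi t - r * Real.log t by
    nlinarith [mul_le_mul_of_nonneg_left this hwij]
  rcases hs.eq_or_lt with rfl | ht
  · simp [chi]
  rcases ha.eq_or_lt with rfl | hr
  · simp
  simp only [chi, if_neg ht.ne', ← Real.sqrt_eq_rpow]
  have hl := Real.log_le_sub_one_of_pos (x := √t / √r) (by positivity)
  rw [Real.log_div (by positivity) (by positivity), Real.log_sqrt hs, Real.log_sqrt ha] at hl
  have h2 := mul_le_mul_of_nonneg_left hl ha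
  have h3 : r * (√t / √r - 1) = √r * √t - r := by
    have : r = √r * √r := (Real.mul_self_sqrt ha).symm
    have hr' : √r ≠ 0 := by positivity
    rw [mul_sub, mul_one]
    congr 1
    nth_rewrite 1 [this]
    field_simp
  rw [h3] at h2
  linarith

lemma half_young {ρ σ : Mat n} (hρ : IsDensity ρ) (hσ : IsDensity σ) :
    traceR (mpow ρ (1/2) * mpow σ (1/2)) ≤ 1 ∧
    (1 ≤ traceR (mpow ρ (1/2) * mpow σ (1/2)) → ρ = σ) := by
  have hy := young_gt (p := 2) (by norm_num) (mpow_psd hρ.1 (1/2)) hσ.1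
  have h2 : mpow (mpow ρ (1/2)) 2 = ρ := by
    have := mpow_mpow_inv hρ.1 (p := 1/2) (by norm_num)
    rwa [one_div_one_div] at this
  rw [h2, density_traceR hρ, density_traceR hσ] at hy
  norm_num at hy ⊢
  exact hy

lemma toReal_facts {p : ℝ≥0∞} (hp : 2⁻¹ ≤ p) (htop : p ≠ ⊤) (h1 : p ≠ 1) :
    0 < p.toReal ∧ p.toReal ≠ 1 := by
  refine ⟨ENNReal.toReal_pos ?_ htop, fun h => h1 ?_⟩
  · rintro rfl
    simp at hp
  · rw [← ENNReal.ofReal_toReal htop, h, ENNReal.ofReal_one]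

lemma dinf_ge {ρ σ : Mat n} (hρ : IsDensity ρ) (hσ : IsDensity σ) {c : ℝ}
    (hc : (c • σ - ρ).PosSemidef) : 1 ≤ c := by
  have := traceR_nonneg hc
  have e : traceR (c • σ) = c * traceR σ := by simp [traceR, Matrix.trace_smul]
  rw [traceR_sub, e, density_traceR hρ, density_traceR hσ] at this
  linarith

lemma Dp_nonneg {p : ℝ≥0∞} (hp : 2⁻¹ ≤ p) {ρ σ : Mat n} (hρ : IsDensity ρ) (hσ : IsDensity σ) :
    0 ≤ Dp p ρ σ := by
  unfold Dp
  split_ifs with htop h1 hs hQ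
  · unfold Dinf
    split_ifs with hex
    · rw [EReal.coe_nonneg]
      apply Real.log_nonneg
      exact le_csInf hex fun c hc => dinf_ge hρ hσ hc.2
    · exact le_top
  · unfold DU
    split_ifs with hs
    · rw [EReal.coe_nonneg]
      linarith [klein hρ hσ hs, (half_young hρ hσ).1]
    · exact le_top
  · exact le_top
  · exact le_top
  · obtain ⟨h0, hne⟩ := toReal_facts hp htop h1
    rw [EReal.coe_nonneg]
    rcases lt_or_gt_of_ne hne with hlt | hgt
    · have hQ1 := (Q_lt h0 hlt hρ hσ).1
      have hQ0 := traceR_nonneg (mpow_psd (sandwich_psd hρ.1 σ p.toReal) p.toReal)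
      exact mul_nonneg_of_nonpos_of_nonpos (inv_nonpos.2 (by linarith)) (Real.log_nonpos hQ0 hQ1)
    · have hs' : suppLe ρ σ := by
        by_contra hc; exact hs ⟨hgt, hc⟩
      have := (Q_gt hgt (sandwich_psd hρ.1 σ p.toReal) hρ hσ
        (unsandwich hρ.1.1 hσ.1 h0 hne (proj_of_suppLe hσ.1.1 hs'))).1
      exact mul_nonneg (inv_nonneg.2 (by linarith)) (Real.log_nonneg this)

lemma Dp_self {p : ℝ≥0∞} (hp : 2⁻¹ ≤ p) {ρ : Mat n} (hρ : IsDensity ρ) :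
    Dp p ρ ρ ≤ 0 := by
  have hself : suppLe ρ ρ := fun v h => h
  unfold Dp
  split_ifs with htop h1 hs hQ
  · unfold Dinf
    have hmem : (0:ℝ) ≤ 1 ∧ ((1:ℝ) • ρ - ρ).PosSemidef :=
      ⟨zero_le_one, by simpa using PosSemidef.zero⟩
    rw [if_pos ⟨1, hmem⟩]
    have : Real.log (sInf {c : ℝ | 0 ≤ c ∧ (c • ρ - ρ).PosSemidef}) ≤ 0 :=
      Real.log_nonpos (Real.sInf_nonneg fun c hc => hc.1)
        (csInf_le ⟨0, fun c hc => hc.1⟩ hmem)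
    exact_mod_cast this
  · unfold DU
    rw [if_pos hself]
    simp [traceR]
  · exact absurd hself hs.2
  all_goals
    obtain ⟨h0, hne⟩ := toReal_facts hp htop h1
    have e : mpow (sandwich p.toReal ρ ρ) p.toReal = ρ := by
      have e1 : sandwich p.toReal ρ ρ = mpow ρ (1 / p.toReal) := by
        unfold sandwich
        generalize p.toReal = q at *
        have : mpow ρ ((1 - q) / (2 * q)) * ρ * mpow ρ ((1 - q) / (2 * q)) =
          mpow ρ ((1 - q) / (2 * q)) * cfc (fun x : ℝ => x) ρ * mpow ρ ((1 - q) / (2 * q)) := by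
          rw [cfc_id'' hρ.1.1]
        rw [this]
        unfold mpow
        rw [← cfc_mul', ← cfc_mul']
        refine cfc_congr' hρ.1 fun x hx => ?_
        rcases hx.eq_or_lt with rfl | hx
        · rw [Real.zero_rpow (x := 1 / q) (by positivity)]; simp
        · nth_rewrite 2 [← Real.rpow_one x]
          rw [← Real.rpow_add hx, ← Real.rpow_add hx]
          congr 1
          field_simp; ring
      rw [e1]
      have := mpow_mpow_inv hρ.1 (p := 1 / p.toReal) (by positivity)
      rwa [one_div_one_div] at this
    have e' : traceR (mpow (sandwich p.toReal ρ ρ) p.toReal) = 1 := by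
      rw [e, density_traceR hρ]
  · exact absurd (e'.symm.trans hQ) one_ne_zero
  · simp [e']

lemma eps_tendsto (c : ℝ) :
    Filter.Tendsto (fun k : ℕ => c * (1 / ((k : ℝ) + 1))) Filter.atTop (nhds 0) := by
  simpa using (tendsto_one_div_add_atTop_nhds_zero_nat (𝕜 := ℝ)).const_mul c

open Filter Topology in
lemma lim_eq {p : ℝ≥0∞} (hp : 2⁻¹ ≤ p) {ρ : Mat n} (hρ : IsDensity ρ) {σ : ℕ → Mat n} {τ : Mat n}
    (hσ : ∀ k, IsDensity (σ k)) (hτ : IsDensity τ) (hlim : Tendsto σ atTop (𝓝 τ))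
    (hD : ∀ k : ℕ, Dp p ρ (σ k) < ((1 / ((k : ℝ) + 1) : ℝ) : EReal)) : ρ = τ := by
  have hε1 : ∀ k : ℕ, 1 / ((k : ℝ) + 1) ≤ 1 := fun k => by
    rw [div_le_one (by positivity)]; linarith [(Nat.cast_nonneg k : (0:ℝ) ≤ k)]
  by_cases htop : p = ⊤
  · simp only [Dp, if_pos htop] at hD
    have hc : ∀ k : ℕ, ∃ c : ℝ, 1 ≤ c ∧ c ≤ Real.exp (1 * (1 / ((k : ℝ) + 1))) ∧
        (c • σ k - ρ).PosSemidef := by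
      intro k
      have h := hD k
      unfold Dinf at h
      split_ifs at h with hex
      · rw [EReal.coe_lt_coe_iff] at h
        set S := {c : ℝ | 0 ≤ c ∧ (c • σ k - ρ).PosSemidef} with hS
        have hSinf : 1 ≤ sInf S := le_csInf hex fun c hc => dinf_ge hρ (hσ k) hc.2
        have h2 : sInf S < Real.exp (1 / ((k : ℝ) + 1)) :=
          (Real.log_lt_iff_lt_exp (by linarith)).1 h
        obtain ⟨c, hcS, hclt⟩ := exists_lt_of_csInf_lt hex h2
        exact ⟨c, dinf_ge hρ (hσ k) hcS.2, by rw [one_mul]; exact hclt.le, hcS.2⟩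
      · simp at h
    choose c hc1 hc2 hc3 using hc
    have hclim : Tendsto c atTop (𝓝 1) := by
      refine tendsto_of_tendsto_of_tendsto_of_le_of_le tendsto_const_nhds ?_ hc1 hc2
      simpa [Function.comp_def] using (Real.continuous_exp.tendsto 0).comp (eps_tendsto 1)
    have hl : Tendsto (fun k => c k • σ k - ρ) atTop (𝓝 ((1:ℝ) • τ - ρ)) :=
      (hclim.smul hlim).sub_const ρ
    have hpsd : ((1:ℝ) • τ - ρ).PosSemidef :=
      isClosed_psd.mem_of_tendsto hl (Eventually.of_forall hc3)
    rw [one_smul] at hpsd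
    have := eq_zero_of_psd hpsd (by rw [traceR_sub, density_traceR hρ, density_traceR hτ]; simp)
    exact (sub_eq_zero.1 this).symm
  by_cases h1 : p = 1
  · simp only [Dp, if_neg htop, if_pos h1] at hD
    have hk : ∀ k : ℕ, 1 - (1/2) * (1 / ((k : ℝ) + 1)) ≤ traceR (mpow ρ (1/2) * mpow (σ k) (1/2)) := by
      intro k
      have h := hD k
      unfold DU at h
      split_ifs at h with hs
      · rw [EReal.coe_lt_coe_iff] at h
        linarith [klein hρ (hσ k) hs]
      · simp at h
    have hl : Tendsto (fun k => traceR (mpow ρ (1/2) * mpow (σ k) (1/2))) atTop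
        (𝓝 (traceR (mpow ρ (1/2) * mpow τ (1/2)))) := by
      refine (traceR_continuous.tendsto _).comp (tendsto_const_nhds.mul ?_)
      exact tendsto_cfc' _ (Real.continuous_rpow_const (by norm_num)) (fun k => (hσ k).1.1) hτ.1.1 hlim
    have hl2 : Tendsto (fun k : ℕ => 1 - (1/2) * (1 / ((k : ℝ) + 1))) atTop (𝓝 1) := by
      simpa using (eps_tendsto (1/2)).const_sub 1
    exact (half_young hρ hτ).2 (le_of_tendsto_of_tendsto' hl2 hl hk)
  obtain ⟨h0, hne⟩ := toReal_facts hp htop h1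
  simp only [Dp, if_neg htop, if_neg h1] at hD
  generalize p.toReal = q at *
  rcases lt_or_gt_of_ne hne with hlt | hgt
  · have hs : 0 < (1 - q) / (2 * q) := div_pos (by linarith) (by positivity)
    have hk : ∀ k : ℕ, Real.exp ((q - 1) * (1 / ((k : ℝ) + 1))) ≤
        traceR (mpow (sandwich q ρ (σ k)) q) := by
      intro k
      have h := hD k
      split_ifs at h with h2 h3
      · simp at h
      · simp at h
      · rw [EReal.coe_lt_coe_iff] at h
        have hQ0 := lt_of_le_of_ne
          (traceR_nonneg (mpow_psd (sandwich_psd hρ.1 (σ k) q) q)) (Ne.symm h3)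
        rw [← Real.le_log_iff_exp_le hQ0]
        have h5 : (1 - q) * ((q - 1)⁻¹ * Real.log (traceR (mpow (sandwich q ρ (σ k)) q))) =
            - Real.log (traceR (mpow (sandwich q ρ (σ k)) q)) := by
          have : q - 1 ≠ 0 := sub_ne_zero.2 hne
          field_simp; ring
        have h6 := mul_le_mul_of_nonneg_left h.le (by linarith : 0 ≤ 1 - q)
        rw [h5] at h6
        linarith
    have hm : Tendsto (fun k => mpow (σ k) ((1 - q) / (2 * q))) atTop
        (𝓝 (mpow τ ((1 - q) / (2 * q)))) :=
      tendsto_cfc' _ (Real.continuous_rpow_const hs.le) (fun k => (hσ k).1.1) hτ.1.1 hlim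
    have hsw : Tendsto (fun k => sandwich q ρ (σ k)) atTop (𝓝 (sandwich q ρ τ)) :=
      (hm.mul tendsto_const_nhds).mul hm
    have hl : Tendsto (fun k => traceR (mpow (sandwich q ρ (σ k)) q)) atTop
        (𝓝 (traceR (mpow (sandwich q ρ τ) q))) :=
      (traceR_continuous.tendsto _).comp
        (tendsto_cfc' _ (Real.continuous_rpow_const h0.le)
          (fun k => (sandwich_psd hρ.1 (σ k) q).1) (sandwich_psd hρ.1 τ q).1 hsw)
    have hl2 : Tendsto (fun k : ℕ => Real.exp ((q - 1) * (1 / ((k : ℝ) + 1)))) atTop (𝓝 1) := by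
      simpa [Function.comp_def] using (Real.continuous_exp.tendsto 0).comp (eps_tendsto (q - 1))
    exact (Q_lt h0 hlt hρ hτ).2 (le_of_tendsto_of_tendsto' hl2 hl hk)
  · have hs : 0 < -((1 - q) / (2 * q)) := by
      rw [← neg_div]; exact div_pos (by linarith) (by positivity)
    have hk : ∀ k : ℕ, suppLe ρ (σ k) ∧ traceR (mpow (sandwich q ρ (σ k)) q) ≤
        Real.exp ((q - 1) * (1 / ((k : ℝ) + 1))) := by
      intro k
      have h := hD k
      split_ifs at h with h2 h3
      · simp at h
      · simp at h
      · refine ⟨by by_contra hc; exact h2 ⟨hgt, hc⟩, ?_⟩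
        rw [EReal.coe_lt_coe_iff] at h
        have hQ0 := lt_of_le_of_ne
          (traceR_nonneg (mpow_psd (sandwich_psd hρ.1 (σ k) q) q)) (Ne.symm h3)
        rw [← Real.log_le_iff_le_exp hQ0]
        have h5 : (q - 1) * ((q - 1)⁻¹ * Real.log (traceR (mpow (sandwich q ρ (σ k)) q))) =
            Real.log (traceR (mpow (sandwich q ρ (σ k)) q)) := by
          have : q - 1 ≠ 0 := sub_ne_zero.2 hne
          field_simp
        have h6 := mul_le_mul_of_nonneg_left h.le (by linarith : 0 ≤ q - 1)
        rw [h5] at h6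
        exact h6
    have hbd : ∀ k, sandwich q ρ (σ k) ∈ {A : Mat n | A.PosSemidef ∧ traceR A ≤
        (1 / q) * Real.exp (q - 1) + (1 - 1 / q) * traceR (1 : Mat n)} := by
      intro k
      refine ⟨sandwich_psd hρ.1 (σ k) q, ?_⟩
      have hy := (young_gt hgt (sandwich_psd hρ.1 (σ k) q) (PosSemidef.one (n := n))).1
      have e1 : mpow (1 : Mat n) (1 - 1 / q) = 1 := by
        unfold mpow
        rw [cfc_apply_one]
        simp
      rw [e1, mul_one] at hy
      refine hy.trans ?_
      gcongr
      refine (hk k).2.trans (Real.exp_le_exp.2 ?_)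
      have := mul_le_mul_of_nonneg_left (hε1 k) (by linarith : 0 ≤ q - 1)
      linarith
    obtain ⟨A, hA, φ, hφ, hAl⟩ := (compact_psd _).tendsto_subseq hbd
    have hm : Tendsto (fun k => mpow (σ (φ k)) (-((1 - q) / (2 * q)))) atTop
        (𝓝 (mpow τ (-((1 - q) / (2 * q))))) :=
      tendsto_cfc' _ (Real.continuous_rpow_const hs.le) (fun k => (hσ (φ k)).1.1) hτ.1.1
        (hlim.comp hφ.tendsto_atTop)
    have hrec : mpow τ (-((1 - q) / (2 * q))) * A * mpow τ (-((1 - q) / (2 * q))) = ρ := by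
      have := (hm.mul hAl).mul hm
      refine tendsto_nhds_unique this ?_
      have e : ∀ k, mpow (σ (φ k)) (-((1 - q) / (2 * q))) * sandwich q ρ (σ (φ k)) *
          mpow (σ (φ k)) (-((1 - q) / (2 * q))) = ρ := fun k =>
        unsandwich hρ.1.1 (hσ _).1 h0 hne (proj_of_suppLe (hσ _).1.1 (hk _).1)
      simp only [Function.comp_apply, e]
      exact tendsto_const_nhds
    have hl : Tendsto (fun k => traceR (mpow (sandwich q ρ (σ (φ k))) q)) atTop
        (𝓝 (traceR (mpow A q))) :=
      (traceR_continuous.tendsto _).comp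
        (tendsto_cfc' _ (Real.continuous_rpow_const h0.le)
          (fun k => (sandwich_psd hρ.1 (σ (φ k)) q).1) hA.1.1 hAl)
    have hl2 : Tendsto (fun k : ℕ => Real.exp ((q - 1) * (1 / ((k : ℝ) + 1)))) atTop (𝓝 1) := by
      simpa [Function.comp_def] using (Real.continuous_exp.tendsto 0).comp (eps_tendsto (q - 1))
    exact (Q_gt hgt hA.1 hρ hτ hrec).2
      (le_of_tendsto_of_tendsto' hl (hl2.comp hφ.tendsto_atTop) (fun k => (hk (φ k)).2))

/-- for `p ∈ [1/2,∞]` and a density `ρ`, `D_p(ρ‖N) ≥ 0`, with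
equality iff `ρ ∈ N`. -/
theorem statement4 {m : ℕ} (N : StarSubalgebra ℂ (Mat (Fin m)))
    (p : ℝ≥0∞) (hp : 2⁻¹ ≤ p) (ρ : Mat (Fin m)) (hρ : IsDensity ρ) :
    0 ≤ DpSet p ρ (N : Set (Mat (Fin m))) ∧
    (DpSet p ρ (N : Set (Mat (Fin m))) = 0 ↔ ρ ∈ N) := by
  have hnn : 0 ≤ DpSet p ρ (N : Set (Mat (Fin m))) :=
    le_iInf₂ fun σ hσ => Dp_nonneg hp hρ hσ.2
  refine ⟨hnn, fun h => ?_, fun h => le_antisymm ?_ hnn⟩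
  · have hex : ∀ k : ℕ, ∃ σ : Mat (Fin m), σ ∈ N ∧ IsDensity σ ∧
        Dp p ρ σ < ((1 / ((k : ℝ) + 1) : ℝ) : EReal) := by
      intro k
      have : DpSet p ρ (N : Set (Mat (Fin m))) < ((1 / ((k : ℝ) + 1) : ℝ) : EReal) := by
        rw [h, EReal.coe_pos]; positivity
      simp only [DpSet, iInf_lt_iff] at this
      obtain ⟨σ, hσ, hlt⟩ := this
      exact ⟨σ, hσ.1, hσ.2, hlt⟩
    choose σ hσN hσ hD using hex
    obtain ⟨τ, hτ, φ, hφ, hlim⟩ := (compact_psd (n := Fin m) 1).tendsto_subseq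
      (x := σ) (fun k => ⟨(hσ k).1, (density_traceR (hσ k)).le⟩)
    have hτd : IsDensity τ := by
      refine ⟨hτ.1, tendsto_nhds_unique
        (((continuous_id.matrix_trace).tendsto τ).comp hlim) ?_⟩
      have : ∀ k, (σ (φ k)).trace = 1 := fun k => (hσ _).2
      simp [Function.comp_def, this]
    have hcl : IsClosed (N : Set (Mat (Fin m))) :=
      Submodule.closed_of_finiteDimensional N.toSubalgebra.toSubmodule
    have hτN : τ ∈ N := hcl.mem_of_tendsto hlim (Filter.Eventually.of_forall fun k => hσN (φ k))
    have : ρ = τ := lim_eq hp hρ (fun k => hσ (φ k)) hτd hlim fun k => by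
      refine (hD (φ k)).trans_le ?_
      rw [EReal.coe_le_coe_iff]
      have : (k : ℝ) ≤ φ k := by exact_mod_cast hφ.id_le k
      gcongr
    rwa [this]
  · exact (iInf₂_le ρ ⟨h, hρ⟩).trans (Dp_self hp hρ)

end GJL
end
end
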